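/- arXiv:2009.11897 — 7 statements merged into one kernel-verified Lean document; each statement's English description precedes it below -/
import Mathlib

section
/- For every n ≥ 1, the maximum of the total size ∑_{r ∈ (ℤ/2ℤ)^n} |A(r)| over all families of subsets A(r) ⊆ (ℤ/3ℤ)^n indexed by r ∈ (ℤ/2ℤ)^n satisfying property (*)_6 equals r_6(ℤ_6^n). -/
/-- `A` contains a `k`-term arithmetic progression `a, a+d, …, a+(k-1)d`
whose terms are pairwise distinct. -/
def IsDistinctAP {G : Type*} [AddCommGroup G] (k : ℕ) (A : Set G) : Prop :=
  ∃ a d : G, (∀ i : Fin k, a + (i : ℕ) • d ∈ A) ∧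
    Function.Injective fun i : Fin k => a + (i : ℕ) • d

/-- `rAP k m n` is the largest cardinality of a subset of `(ℤ/mℤ)^n` containing
no `k`-term arithmetic progression of pairwise distinct elements. -/
noncomputable def rAP (k m n : ℕ) : ℕ :=
  sSup {s : ℕ | ∃ A : Finset (Fin n → ZMod m),
    ¬ IsDistinctAP k (A : Set (Fin n → ZMod m)) ∧ A.card = s}

/-!
By the Chinese remainder theorem, `(ℤ/pqℤ)ⁿ ≃ (ℤ/pℤ)ⁿ × (ℤ/qℤ)ⁿ` for coprime `p` and `q`, so a
subset of the left side is a family of subsets of `(ℤ/qℤ)ⁿ` indexed by `(ℤ/pℤ)ⁿ`, its slices. A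
`pq`-term progression with distinct terms is a coset of a cyclic subgroup of order `pq`, that is,
the product of a coset of a cyclic subgroup of order `p` and one of order `q`. Hence a set contains
such a progression exactly when the `p` slices over some coset of order `p` share a `q`-term
progression; for `p = 2` these are just two distinct slices.
-/

section ArithmeticProgressions

variable {G H : Type*} [AddCommGroup G] [AddCommGroup H] {k : ℕ}

theorem isDistinctAP_preimage_addEquiv_iff (e : G ≃+ H) {B : Set H} :
    IsDistinctAP k (e ⁻¹' B) ↔ IsDistinctAP k B := by
  simp only [IsDistinctAP, e.surjective.exists, Set.mem_preimage, ← map_nsmul, ← map_add]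
  simp only [← e.injective.of_comp_iff, Function.comp_def]

theorem not_isDistinctAP_empty [NeZero k] : ¬ IsDistinctAP k (∅ : Set G) :=
  fun ⟨_, _, h_mem, _⟩ => h_mem 0

theorem injective_add_nsmul_iff_addOrderOf_eq [NeZero k] {a d : G} (hd : k • d = 0) :
    Function.Injective (fun i : Fin k => a + (i : ℕ) • d) ↔ addOrderOf d = k := by
  have h_dvd : addOrderOf d ∣ k := addOrderOf_dvd_of_nsmul_eq_zero hd
  constructor
  · intro h_inj
    refine (Nat.le_of_dvd (NeZero.pos k) h_dvd).eq_of_not_lt fun h_lt => ?_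
    have h_zero : (⟨addOrderOf d, h_lt⟩ : Fin k) = 0 := h_inj (by simp)
    exact (Nat.pos_of_dvd_of_pos h_dvd (NeZero.pos k)).ne' (congrArg Fin.val h_zero)
  · rintro rfl i j hij
    exact Fin.ext (nsmul_injOn_Iio_addOrderOf i.isLt j.isLt (add_left_cancel hij))

theorem isDistinctAP_iff_exists_addOrderOf_eq [NeZero k] (hG : ∀ g : G, k • g = 0) {A : Set G} :
    IsDistinctAP k A ↔ ∃ a d : G, addOrderOf d = k ∧ ∀ i : ℕ, a + i • d ∈ A := by
  refine exists₂_congr fun a d => ?_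
  rw [injective_add_nsmul_iff_addOrderOf_eq (hG d), and_comm]
  refine and_congr_right fun hd => ⟨fun h i => ?_, fun h i => h i⟩
  have h_mod : a + (i % k) • d ∈ A := h ⟨i % k, Nat.mod_lt i (NeZero.pos k)⟩
  rwa [← hd, mod_addOrderOf_nsmul] at h_mod

end ArithmeticProgressions

section Products

variable {G H : Type*} [AddCommGroup G] [AddCommGroup H] {p q : ℕ}

theorem addOrderOf_prodMk_eq_mul_iff (hpq : p.Coprime q) {d : G} {f : H}
    (hd : p • d = 0) (hf : q • f = 0) :
    addOrderOf (d, f) = p * q ↔ addOrderOf d = p ∧ addOrderOf f = q := by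
  have hd_dvd : addOrderOf d ∣ p := addOrderOf_dvd_of_nsmul_eq_zero hd
  have hf_dvd : addOrderOf f ∣ q := addOrderOf_dvd_of_nsmul_eq_zero hf
  rw [Prod.addOrderOf_mk, (hpq.of_dvd hd_dvd hf_dvd).lcm_eq_mul]
  refine ⟨fun h => ⟨hd_dvd.antisymm ?_, hf_dvd.antisymm ?_⟩, fun ⟨hd, hf⟩ => by rw [hd, hf]⟩
  · exact (hpq.of_dvd_right hf_dvd).dvd_of_dvd_mul_right (h ▸ dvd_mul_right p q)
  · exact (hpq.symm.of_dvd_right hd_dvd).dvd_of_dvd_mul_left (h ▸ dvd_mul_left q p)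

theorem forall_add_nsmul_prodMk_mem_iff {a d : G} {b f : H}
    (h_coprime : (addOrderOf d).Coprime (addOrderOf f)) {B : Set (G × H)} :
    (∀ i : ℕ, (a, b) + i • (d, f) ∈ B) ↔ ∀ i j : ℕ, (a + i • d, b + j • f) ∈ B := by
  refine ⟨fun h i j => ?_, fun h i => h i i⟩
  obtain ⟨m, hmi, hmj⟩ := Nat.chineseRemainder h_coprime i j
  rw [← nsmul_eq_nsmul_iff_modEq.2 hmi, ← nsmul_eq_nsmul_iff_modEq.2 hmj]
  exact h m

theorem iInter_add_nsmul_eq_inter {G α : Type*} [AddMonoid G] {A : G → Set α} {r d : G}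
    (hd : 2 • d = 0) :
    ⋂ i : ℕ, A (r + i • d) = A r ∩ A (r + d) := by
  refine subset_antisymm (Set.subset_inter ?_ ?_) (Set.subset_iInter fun i => ?_)
  · simpa only [zero_nsmul, add_zero] using Set.iInter_subset (fun i : ℕ => A (r + i • d)) 0
  · simpa only [one_nsmul] using Set.iInter_subset (fun i : ℕ => A (r + i • d)) 1
  · rcases Nat.even_or_odd' i with ⟨j, rfl | rfl⟩
    · simp [mul_nsmul, hd]
    · simp [add_nsmul, mul_nsmul, hd]

/-- The property `(*)` for a family of subsets of `H` indexed by `G`: along every coset of a cyclic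
subgroup of order `p` of `G`, the intersection of the members contains no `q`-term progression of
distinct elements. The paper's `(*)_6` is the case `p = 2`, `q = 3`, where such a coset is a pair of
distinct indices. -/
def IsStarFamily (p q : ℕ) (A : G → Set H) : Prop :=
  ∀ r d : G, addOrderOf d = p → ¬ IsDistinctAP q (⋂ i : ℕ, A (r + i • d))

theorem not_isDistinctAP_mul_iff_isStarFamily [NeZero p] [NeZero q] (hpq : p.Coprime q)
    (hG : ∀ g : G, p • g = 0) (hH : ∀ h : H, q • h = 0) {B : Set (G × H)} :
    ¬ IsDistinctAP (p * q) B ↔ IsStarFamily p q fun r => Prod.mk r ⁻¹' B := by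
  have h_exp (z : G × H) : (p * q) • z = 0 :=
    Prod.ext (by simp [mul_nsmul, hG]) (by simp [mul_nsmul', hH])
  simp only [IsStarFamily, isDistinctAP_iff_exists_addOrderOf_eq h_exp,
    isDistinctAP_iff_exists_addOrderOf_eq hH, Prod.exists, Set.mem_iInter, Set.mem_preimage,
    addOrderOf_prodMk_eq_mul_iff hpq (hG _) (hH _)]
  constructor
  · rintro h_free r d hd ⟨b, f, hf, h_mem⟩
    refine h_free ⟨r, b, d, f, ⟨hd, hf⟩, ?_⟩
    exact (forall_add_nsmul_prodMk_mem_iff (by rwa [hd, hf])).2 fun i j => h_mem j i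
  · rintro h_star ⟨r, b, d, f, ⟨hd, hf⟩, h_mem⟩
    refine h_star r d hd ⟨b, f, hf, fun j i => ?_⟩
    exact (forall_add_nsmul_prodMk_mem_iff (by rwa [hd, hf])).1 h_mem i j

theorem isStarFamily_two_iff (hG : ∀ g : G, 2 • g = 0) {A : G → Set H} :
    IsStarFamily 2 q A ↔ ∀ r' r'' : G, r' ≠ r'' → ¬ IsDistinctAP q (A r' ∩ A r'') := by
  simp only [IsStarFamily, iInter_add_nsmul_eq_inter (hG _), addOrderOf_eq_prime_iff, hG,
    true_and]
  refine forall_congr' fun r' => (Equiv.addLeft r').forall_congr fun d => ?_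
  simp

end Products

section Slices

variable {G H : Type*} [Fintype G] [Fintype H] [DecidableEq G] [DecidableEq H]

/-- A finite subset of `G × H` is the same as the family of its slices over the points of `G`. -/
def slicesEquiv : Finset (G × H) ≃ (G → Finset H) where
  toFun B r := {x | (r, x) ∈ B}
  invFun A := {z | z.2 ∈ A z.1}
  left_inv B := by ext; simp
  right_inv A := by ext; simp

theorem coe_slicesEquiv_apply (B : Finset (G × H)) (r : G) :
    (slicesEquiv B r : Set H) = Prod.mk r ⁻¹' (B : Set (G × H)) := by
  ext; simp [slicesEquiv]

theorem card_eq_sum_card_slicesEquiv (B : Finset (G × H)) :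
    B.card = ∑ r, (slicesEquiv B r).card := by
  simp only [slicesEquiv, Equiv.coe_fn_mk, Finset.card_filter]
  rw [← Fintype.sum_prod_type' fun r x => if (r, x) ∈ B then 1 else 0]
  simp

end Slices

section ChineseRemainder

variable {p q : ℕ}

/-- The Chinese remainder theorem, applied coordinatewise. -/
def piChineseRemainder (ι : Type*) (hpq : p.Coprime q) :
    (ι → ZMod (p * q)) ≃+ (ι → ZMod p) × (ι → ZMod q) :=
  (AddEquiv.piCongrRight fun _ => (ZMod.chineseRemainder hpq).toAddEquiv).trans
    { Equiv.arrowProdEquivProdArrow ι (fun _ => ZMod p) (fun _ => ZMod q) with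
      map_add' := fun _ _ => rfl }

theorem nsmul_pi_zmod_eq_zero {ι : Type*} (m : ℕ) (x : ι → ZMod m) : m • x = 0 := by
  ext i
  simp

/-- A finite subset of `(ℤ/pqℤ)^ι`, seen as a family of subsets of `(ℤ/qℤ)^ι` indexed by
`(ℤ/pℤ)^ι`. -/
def chineseSlices (ι : Type*) [Fintype ι] [DecidableEq ι] [NeZero p] [NeZero q]
    (hpq : p.Coprime q) :
    Finset (ι → ZMod (p * q)) ≃ ((ι → ZMod p) → Finset (ι → ZMod q)) :=
  (piChineseRemainder ι hpq).toEquiv.finsetCongr.trans slicesEquiv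

variable {ι : Type*} [Fintype ι] [DecidableEq ι] [NeZero p] [NeZero q]

theorem card_eq_sum_card_chineseSlices (hpq : p.Coprime q) (A : Finset (ι → ZMod (p * q))) :
    A.card = ∑ r, (chineseSlices ι hpq A r).card := by
  rw [chineseSlices, Equiv.trans_apply, ← card_eq_sum_card_slicesEquiv, Equiv.finsetCongr_apply,
    Finset.card_map]

theorem not_isDistinctAP_iff_isStarFamily_chineseSlices (hpq : p.Coprime q)
    (A : Finset (ι → ZMod (p * q))) :
    ¬ IsDistinctAP (p * q) (A : Set (ι → ZMod (p * q))) ↔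
      IsStarFamily p q fun r => (chineseSlices ι hpq A r : Set (ι → ZMod q)) := by
  let e := piChineseRemainder ι hpq
  have h_image : ((e.toEquiv.finsetCongr A : Finset _) : Set _) = e.symm ⁻¹' (A : Set _) := by
    rw [Equiv.finsetCongr_apply, Finset.coe_map]
    exact e.toEquiv.image_eq_preimage_symm _
  simp only [chineseSlices, Equiv.trans_apply, coe_slicesEquiv_apply]
  rw [← not_isDistinctAP_mul_iff_isStarFamily hpq (nsmul_pi_zmod_eq_zero p)
    (nsmul_pi_zmod_eq_zero q), h_image, isDistinctAP_preimage_addEquiv_iff]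

end ChineseRemainder

theorem isGreatest_rAP (k m n : ℕ) [NeZero k] [NeZero m] :
    IsGreatest {s : ℕ | ∃ A : Finset (Fin n → ZMod m),
      ¬ IsDistinctAP k (A : Set (Fin n → ZMod m)) ∧ A.card = s} (rAP k m n) := by
  have h_bdd : BddAbove {s : ℕ | ∃ A : Finset (Fin n → ZMod m),
      ¬ IsDistinctAP k (A : Set (Fin n → ZMod m)) ∧ A.card = s} :=
    ⟨Fintype.card (Fin n → ZMod m), fun _ ⟨A, _, hA⟩ => hA ▸ A.card_le_univ⟩
  have h_empty : ¬ IsDistinctAP k ((∅ : Finset (Fin n → ZMod m)) : Set (Fin n → ZMod m)) := by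
    simpa only [Finset.coe_empty] using not_isDistinctAP_empty
  exact ⟨Nat.sSup_mem ⟨0, ∅, h_empty, rfl⟩ h_bdd, fun _ hs => le_csSup h_bdd hs⟩

theorem subset_reformulation_star6_general (p q n : ℕ) [NeZero p] [NeZero q] (hpq : p.Coprime q) :
    IsGreatest {S : ℕ | ∃ A : (Fin n → ZMod p) → Finset (Fin n → ZMod q),
      IsStarFamily p q (fun r => (A r : Set (Fin n → ZMod q))) ∧ S = ∑ r, (A r).card}
    (rAP (p * q) (p * q) n) := by
  convert isGreatest_rAP (p * q) (p * q) n using 1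
  ext S
  refine ((chineseSlices (Fin n) hpq).exists_congr fun A => ?_).symm
  rw [not_isDistinctAP_iff_isStarFamily_chineseSlices hpq, card_eq_sum_card_chineseSlices hpq,
    eq_comm]

theorem subset_reformulation_star6 (n : ℕ) (hn : 1 ≤ n) :
    IsGreatest {S : ℕ | ∃ A : (Fin n → ZMod 2) → Finset (Fin n → ZMod 3),
      (∀ r' r'' : Fin n → ZMod 2, r' ≠ r'' →
        ¬ IsDistinctAP 3 ((A r' ∩ A r'' : Finset (Fin n → ZMod 3)) : Set (Fin n → ZMod 3))) ∧
      S = ∑ r : Fin n → ZMod 2, (A r).card}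
    (rAP 6 6 n) := by
  simpa only [isStarFamily_two_iff (nsmul_pi_zmod_eq_zero 2), ← Finset.coe_inter]
    using subset_reformulation_star6_general 2 3 n (by decide)
end

section
/- If m = 4M + 2 for some nonnegative integer M (i.e., m ≡ 2 (mod 4)), then for every n ≥ 1, r_3(ℤ_m^n) = 2^n · r_3(ℤ_{m/2}^n). -/
/-!
By the Chinese remainder theorem `(ℤ/2Nℤ)^n ≃ (ℤ/2ℤ)^n × (ℤ/Nℤ)^n` for odd `N`, and `2` kills the
first factor. A three-term progression with difference `d` has distinct terms exactly when
`2 • d ≠ 0`, a condition that only sees the second component of `d`. Hence the cylinder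
`(ℤ/2ℤ)^n × B` is progression-free as soon as `B` is, while each of the `2^n` slices of a
progression-free set is a progression-free subset of `(ℤ/Nℤ)^n`.
-/

open Finset

section

variable {k : ℕ} {E G H : Type*} [AddCommGroup E] [AddCommGroup G] [AddCommGroup H]

theorem IsDistinctAP.of_affine {A : Set G} {B : Set H} (hA : IsDistinctAP k A) (c : H) {f : G →+ H}
    (hf : Function.Injective f) (hAB : ∀ a ∈ A, c + f a ∈ B) : IsDistinctAP k B := by
  obtain ⟨a, d, hmem, hinj⟩ := hA
  have hterm (i : ℕ) : c + f a + i • f d = c + f (a + i • d) := by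
    rw [map_add, map_nsmul, add_assoc]
  refine ⟨c + f a, f d, fun i => ?_, ?_⟩
  · rw [hterm]
    exact hAB _ (hmem i)
  · simp only [hterm]
    exact (add_right_injective c).comp (hf.comp hinj)

theorem injective_add_nsmul_fin_three_iff {a d : G} :
    Function.Injective (fun i : Fin 3 => a + (i : ℕ) • d) ↔ 2 • d ≠ 0 := by
  constructor
  · intro hinj h
    have : (0 : Fin 3) = 2 := hinj (by simp [h])
    exact absurd this (by decide)
  · intro h
    have hd : d ≠ 0 := by
      rintro rfl
      exact h (nsmul_zero 2)
    intro i j hij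
    fin_cases i <;> fin_cases j <;> simp_all [two_nsmul]

theorem isDistinctAP_three_iff {A : Set G} :
    IsDistinctAP 3 A ↔ ∃ a d : G, (∀ i : Fin 3, a + (i : ℕ) • d ∈ A) ∧ 2 • d ≠ 0 := by
  simp only [IsDistinctAP, injective_add_nsmul_fin_three_iff]

theorem IsDistinctAP.of_univ_prod (hE : ∀ x : E, 2 • x = 0) {B : Set H}
    (h : IsDistinctAP 3 (Set.univ ×ˢ B : Set (E × H))) : IsDistinctAP 3 B := by
  obtain ⟨a, d, hmem, hd⟩ := isDistinctAP_three_iff.mp h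
  refine isDistinctAP_three_iff.mpr ⟨a.2, d.2, fun i => (hmem i).2, fun h2 => hd ?_⟩
  exact Prod.ext (hE d.1) h2

/-- The largest cardinality of a finite subset of `G` without `k`-term progressions of pairwise
distinct elements: the quantity `r_k(G)`, defined for any abelian group so that it can be computed
along isomorphisms and products. As a supremum in `ℕ` it is `0` if the cardinalities are unbounded,
so it is meaningful for finite `G`. -/
noncomputable def maxAPFreeCard (k : ℕ) (G : Type*) [AddCommGroup G] : ℕ :=
  sSup {s : ℕ | ∃ A : Finset G, ¬ IsDistinctAP k (A : Set G) ∧ #A = s}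

theorem rAP_eq_maxAPFreeCard (k m n : ℕ) : rAP k m n = maxAPFreeCard k (Fin n → ZMod m) :=
  rfl

theorem card_le_maxAPFreeCard [Finite G] {A : Finset G} (hA : ¬ IsDistinctAP k (A : Set G)) :
    #A ≤ maxAPFreeCard k G := by
  have := Fintype.ofFinite G
  refine le_csSup ⟨Fintype.card G, ?_⟩ ⟨A, hA, rfl⟩
  rintro _ ⟨B, -, rfl⟩
  exact card_le_univ B

theorem maxAPFreeCard_le {c : ℕ} (h : ∀ A : Finset G, ¬ IsDistinctAP k (A : Set G) → #A ≤ c) :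
    maxAPFreeCard k G ≤ c := by
  refine csSup_le' ?_
  rintro _ ⟨A, hA, rfl⟩
  exact h A hA

theorem maxAPFreeCard_le_of_addEquiv [Finite H] (e : G ≃+ H) :
    maxAPFreeCard k G ≤ maxAPFreeCard k H := by
  refine maxAPFreeCard_le fun A hA => ?_
  rw [← card_map e.toEquiv.toEmbedding]
  refine card_le_maxAPFreeCard fun hmap => hA ?_
  exact hmap.of_affine 0 (f := e.symm.toAddMonoidHom) e.symm.injective (by simp)

theorem maxAPFreeCard_congr [Finite H] (e : G ≃+ H) : maxAPFreeCard k G = maxAPFreeCard k H :=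
  have : Finite G := .of_equiv H e.symm.toEquiv
  (maxAPFreeCard_le_of_addEquiv e).antisymm (maxAPFreeCard_le_of_addEquiv e.symm)

theorem card_filter_fst_eq_le_maxAPFreeCard [Finite H] [DecidableEq E] {A : Finset (E × H)}
    (hA : ¬ IsDistinctAP k (A : Set (E × H))) (x : E) :
    #{p ∈ A | p.1 = x} ≤ maxAPFreeCard k H := by
  classical
  have hinj : Set.InjOn Prod.snd (SetLike.coe {p ∈ A | p.1 = x}) := by
    intro p hp q hq hpq
    rw [mem_coe, mem_filter] at hp hq
    exact Prod.ext (hp.2.trans hq.2.symm) hpq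
  rw [← card_image_of_injOn hinj]
  refine card_le_maxAPFreeCard fun hslice => hA ?_
  refine hslice.of_affine (x, 0) (f := AddMonoidHom.inr E H) (Prod.mk_right_injective 0) ?_
  simp

theorem maxAPFreeCard_prod_le [Finite E] [Finite H] :
    maxAPFreeCard k (E × H) ≤ Nat.card E * maxAPFreeCard k H := by
  classical
  have := Fintype.ofFinite E
  refine maxAPFreeCard_le fun A hA => ?_
  rw [mul_comm, Nat.card_eq_fintype_card]
  exact card_le_mul_card_image_of_maps_to (fun _ _ => mem_univ _) _
    fun x _ => card_filter_fst_eq_le_maxAPFreeCard hA x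

theorem card_mul_maxAPFreeCard_three_le_prod [Finite E] [Finite H] (hE : ∀ x : E, 2 • x = 0) :
    Nat.card E * maxAPFreeCard 3 H ≤ maxAPFreeCard 3 (E × H) := by
  have := Fintype.ofFinite E
  rw [mul_comm, ← Nat.le_div_iff_mul_le Nat.card_pos]
  refine maxAPFreeCard_le fun B hB => ?_
  rw [Nat.le_div_iff_mul_le Nat.card_pos, mul_comm, Nat.card_eq_fintype_card, ← card_univ,
    ← card_product]
  refine card_le_maxAPFreeCard fun hcyl => hB ?_
  rw [coe_product, coe_univ] at hcyl
  exact hcyl.of_univ_prod hE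

theorem r3_two_mod_four_general [Finite E] [Finite H] (e : G ≃+ E × H)
    (hE : ∀ x : E, 2 • x = 0) : maxAPFreeCard 3 G = Nat.card E * maxAPFreeCard 3 H :=
  (maxAPFreeCard_congr e).trans
    (maxAPFreeCard_prod_le.antisymm (card_mul_maxAPFreeCard_three_le_prod hE))

end

/-- The Chinese remainder isomorphism applied in each coordinate of `(ℤ/abℤ)^ι`. -/
def piZModMulAddEquiv (ι : Type*) {a b : ℕ} (h : a.Coprime b) :
    (ι → ZMod (a * b)) ≃+ (ι → ZMod a) × (ι → ZMod b) where
  toEquiv := (Equiv.piCongrRight fun _ => (ZMod.chineseRemainder h).toEquiv).trans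
    (Equiv.arrowProdEquivProdArrow ι _ _)
  map_add' v w := by ext i <;> simp

theorem r3_two_mod_four (M : ℕ) (n : ℕ) (hn : 1 ≤ n) :
    rAP 3 (4 * M + 2) n = 2 ^ n * rAP 3 (2 * M + 1) n := by
  have hcoprime : Nat.Coprime 2 (2 * M + 1) := Nat.coprime_two_left.mpr (odd_two_mul_add_one M)
  rw [show 4 * M + 2 = 2 * (2 * M + 1) by ring]
  simpa [rAP_eq_maxAPFreeCard] using
    r3_two_mod_four_general (piZModMulAddEquiv (Fin n) hcoprime) (ZModModule.char_nsmul_eq_zero 2)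
end

section
/- The set A = {0,1,2,3,4} ⊆ ℤ/6ℤ contains no 6-term arithmetic progression of pairwise distinct elements, but the product set A × A ⊆ (ℤ/6ℤ)^2 does contain a 6-term arithmetic progression of pairwise distinct elements, namely (0,0), (2,3), (4,0), (0,3), (2,0), (4,3) (with common difference (2,3)). In particular, the direct product of two 6AP-free sets need not be 6AP-free. -/
/-!
In a group of order `m`, a progression of `m` distinct terms exhausts the group, so every proper
subset of `ZMod m` is free of them. In the ring `ZMod m` the multiples of a non-unit never reach
`-1`. If `m = a * b` with `a, b ≠ 1` coprime, then `a` and `b` are non-units of additive orders `b`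
and `a`, so `(a, b)` has order `m` and its multiples form a progression of `m` distinct terms in
`{-1}ᶜ ×ˢ {-1}ᶜ`. For `m = 6 = 2 * 3`, the set `{-1}ᶜ` is `{0, 1, 2, 3, 4}`.
-/

theorem eq_univ_of_isDistinctAP {G : Type*} [AddCommGroup G] [Finite G] {k : ℕ} {A : Set G}
    (hk : Nat.card G ≤ k) (hA : IsDistinctAP k A) : A = Set.univ := by
  obtain ⟨a, d, hmem, hinj⟩ := hA
  have hsurj : Function.Surjective fun i : Fin k => a + (i : ℕ) • d :=
    (hinj.bijective_of_nat_card_le (by rwa [Nat.card_fin])).surjective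
  exact Set.eq_univ_of_forall (hsurj.forall.2 hmem)

theorem injective_add_nsmul_of_le_addOrderOf {M : Type*} [AddLeftCancelMonoid M] {k : ℕ} (a : M)
    {d : M} (hk : k ≤ addOrderOf d) :
    Function.Injective fun i : Fin k => a + (i : ℕ) • d := fun i j hij =>
  Fin.ext <| nsmul_injOn_Iio_addOrderOf (i.isLt.trans_le hk) (j.isLt.trans_le hk)
    (add_left_cancel hij)

theorem nsmul_ne_neg_one_of_not_isUnit {R : Type*} [CommRing R] {d : R} (hd : ¬IsUnit d) (n : ℕ) :
    n • d ≠ -1 := by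
  intro h
  have hunit : IsUnit ((n : R) * d) := by
    rw [← nsmul_eq_mul, h]
    exact isUnit_one.neg
  exact hd (isUnit_of_mul_isUnit_right hunit)

theorem not_isUnit_natCast_zmod_of_dvd {m a : ℕ} (ha : a ≠ 1) (ham : a ∣ m) :
    ¬IsUnit (a : ZMod m) := fun h =>
  ha (Nat.Coprime.eq_one_of_dvd ((ZMod.isUnit_iff_coprime a m).1 h) ham)

theorem addOrderOf_natCast_prod_zmod_mul {a b : ℕ} (hm : a * b ≠ 0) (hab : a.Coprime b) :
    addOrderOf ((a, b) : ZMod (a * b) × ZMod (a * b)) = a * b := by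
  obtain ⟨ha, hb⟩ := mul_ne_zero_iff.1 hm
  have order_a : addOrderOf (a : ZMod (a * b)) = b := by
    rw [ZMod.addOrderOf_coe a hm, Nat.gcd_mul_right_left, Nat.mul_div_cancel_left b ha.bot_lt]
  have order_b : addOrderOf (b : ZMod (a * b)) = a := by
    rw [ZMod.addOrderOf_coe b hm, Nat.gcd_mul_left_left, Nat.mul_div_cancel a hb.bot_lt]
  rw [Prod.addOrderOf_mk, order_a, order_b, hab.symm.lcm_eq_mul, mul_comm]

theorem product_construction_fails_general {a b : ℕ} (ha : a ≠ 1) (hb : b ≠ 1)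
    (hab : a.Coprime b) :
    ¬ IsDistinctAP (a * b) ({-1}ᶜ : Set (ZMod (a * b))) ∧
    (∀ i : Fin (a * b), ((0, 0) : ZMod (a * b) × ZMod (a * b)) +
        (i : ℕ) • ((a, b) : ZMod (a * b) × ZMod (a * b)) ∈
      ({-1}ᶜ : Set (ZMod (a * b))) ×ˢ ({-1}ᶜ : Set (ZMod (a * b)))) ∧
    (Function.Injective fun i : Fin (a * b) => ((0, 0) : ZMod (a * b) × ZMod (a * b)) +
      (i : ℕ) • ((a, b) : ZMod (a * b) × ZMod (a * b))) ∧
    IsDistinctAP (a * b) (({-1}ᶜ : Set (ZMod (a * b))) ×ˢ ({-1}ᶜ : Set (ZMod (a * b)))) := by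
  have hm : a * b ≠ 0 := by
    refine mul_ne_zero ?_ ?_ <;> rintro rfl <;> simp_all
  have : NeZero (a * b) := ⟨hm⟩
  have hfree : ¬ IsDistinctAP (a * b) ({-1}ᶜ : Set (ZMod (a * b))) := fun hAP =>
    Set.singleton_ne_empty _ <| Set.compl_univ_iff.1 <|
      eq_univ_of_isDistinctAP (Nat.card_zmod _).le hAP
  have hmem (i : Fin (a * b)) : ((0, 0) : ZMod (a * b) × ZMod (a * b)) +
      (i : ℕ) • ((a, b) : ZMod (a * b) × ZMod (a * b)) ∈
        ({-1}ᶜ : Set (ZMod (a * b))) ×ˢ ({-1}ᶜ : Set (ZMod (a * b))) := by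
    rw [Prod.mk_zero_zero, zero_add]
    exact ⟨nsmul_ne_neg_one_of_not_isUnit (not_isUnit_natCast_zmod_of_dvd ha (a.dvd_mul_right b)) i,
      nsmul_ne_neg_one_of_not_isUnit (not_isUnit_natCast_zmod_of_dvd hb (b.dvd_mul_left a)) i⟩
  have hinj := injective_add_nsmul_of_le_addOrderOf (0, 0)
    (addOrderOf_natCast_prod_zmod_mul hm hab).ge
  exact ⟨hfree, hmem, hinj, _, _, hmem, hinj⟩

theorem zero_to_four_eq_compl_neg_one_zmod_six : ({0, 1, 2, 3, 4} : Set (ZMod 6)) = {-1}ᶜ := by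
  ext x
  simp only [Set.mem_insert_iff, Set.mem_singleton_iff, Set.mem_compl_iff]
  revert x
  decide

theorem product_construction_fails :
    ¬ IsDistinctAP 6 ({0, 1, 2, 3, 4} : Set (ZMod 6)) ∧
    (∀ i : Fin 6, ((0, 0) : ZMod 6 × ZMod 6) + (i : ℕ) • ((2, 3) : ZMod 6 × ZMod 6) ∈
      ({0, 1, 2, 3, 4} : Set (ZMod 6)) ×ˢ ({0, 1, 2, 3, 4} : Set (ZMod 6))) ∧
    (Function.Injective fun i : Fin 6 =>
      ((0, 0) : ZMod 6 × ZMod 6) + (i : ℕ) • ((2, 3) : ZMod 6 × ZMod 6)) ∧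
    IsDistinctAP 6 (({0, 1, 2, 3, 4} : Set (ZMod 6)) ×ˢ ({0, 1, 2, 3, 4} : Set (ZMod 6))) := by
  rw [zero_to_four_eq_compl_neg_one_zmod_six]
  exact product_construction_fails_general (a := 2) (b := 3) (by decide) (by decide) (by decide)
end

section
/- In (ℤ/3ℤ)^2, where a 3-term arithmetic progression of distinct elements is an unordered triple {a, a+d, a+2d} of three pairwise distinct elements (equivalently, an affine line, of which there are 12 in total): every subset of size 5 contains at least 1 such triple, every subset of size 6 contains at least 2, every subset of size 7 contains at least 5, and every subset of size 8 contains at least 8. -/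
/-- The set of 3-term arithmetic progressions of distinct elements contained in
`A ⊆ (ℤ/3ℤ)^n`, viewed as unordered triples: 3-element subsets summing to `0`
(equivalently, affine lines). -/
def apTriples (n : ℕ) (A : Finset (Fin n → ZMod 3)) : Finset (Finset (Fin n → ZMod 3)) :=
  (A.powersetCard 3).filter fun t => ∑ x ∈ t, x = 0

/-!
Any two distinct points lie on exactly one line, so the lines form a Steiner triple system. A line
that meets both `A` and `Aᶜ` contains exactly two of the `|A| * |Aᶜ|` pairs joining `A` to `Aᶜ`, so
`|A| * |Aᶜ| / 2` lines are mixed and all other lines lie in `A` or in `Aᶜ`. Since two lines share at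
most one point, a set of at most four points contains at most one line, and this bounds the number
of lines in `Aᶜ`.
-/

open Finset

/-- A Steiner triple system on `V`, given by its set `L` of blocks: all blocks have three points,
and any two distinct points lie in exactly one block. The lines of `(ℤ/3ℤ)^n` form such a system. -/
structure IsSteinerTripleSystem {V : Type*} (L : Finset (Finset V)) : Prop where
  card_block : ∀ t ∈ L, #t = 3
  existsUnique_block : ∀ ⦃x y : V⦄, x ≠ y → ∃! t, t ∈ L ∧ x ∈ t ∧ y ∈ t

section ThreePointBlock

variable {V : Type*} [Fintype V] [DecidableEq V]

theorem card_product_compl_inter_offDiag (t A : Finset V) :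
    #(A ×ˢ Aᶜ ∩ t.offDiag) = #(t ∩ A) * #(t \ A) := by
  rw [← card_product]
  congr 1
  ext ⟨x, y⟩
  grind [mem_compl]

theorem monochromatic_add_card_inter_mul_card_sdiff {t : Finset V} (ht : #t = 3) (A : Finset V) :
    2 * ((if t ⊆ A then 1 else 0) + (if t ⊆ Aᶜ then 1 else 0)) + #(t ∩ A) * #(t \ A) = 2 := by
  have subset_iff : t ⊆ A ↔ #(t \ A) = 0 := by rw [card_eq_zero, sdiff_eq_empty_iff_subset]
  have subset_compl_iff : t ⊆ Aᶜ ↔ #(t ∩ A) = 0 := by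
    rw [card_eq_zero, subset_compl_iff_disjoint_right, disjoint_iff_inter_eq_empty]
  have card_add : #(t ∩ A) + #(t \ A) = 3 := by rw [card_inter_add_card_sdiff, ht]
  simp only [subset_iff, subset_compl_iff]
  have card_le : #(t ∩ A) ≤ 3 := by lia
  have card_sdiff : #(t \ A) = 3 - #(t ∩ A) := by lia
  rw [card_sdiff]
  interval_cases #(t ∩ A) <;> rfl

end ThreePointBlock

namespace IsSteinerTripleSystem

variable {V : Type*} {L : Finset (Finset V)}

section DecidableEq

variable [DecidableEq V]

theorem card_inter_le_one (hL : IsSteinerTripleSystem L) {s t : Finset V} (hs : s ∈ L)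
    (ht : t ∈ L) (hst : s ≠ t) : #(s ∩ t) ≤ 1 := by
  refine card_le_one.2 fun x hx y hy => ?_
  by_contra hxy
  rw [mem_inter] at hx hy
  exact hst ((hL.existsUnique_block hxy).unique ⟨hs, hx.1, hy.1⟩ ⟨ht, hx.2, hy.2⟩)

theorem card_blocks_subset_eq_zero (hL : IsSteinerTripleSystem L) {B : Finset V} (hB : #B < 3) :
    #{t ∈ L | t ⊆ B} = 0 := by
  refine card_filter_eq_zero_iff.2 fun t ht htB => ?_
  exact ((card_le_card htB).trans_lt hB).ne (hL.card_block t ht)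

theorem card_blocks_subset_le_one (hL : IsSteinerTripleSystem L) {B : Finset V} (hB : #B < 5) :
    #{t ∈ L | t ⊆ B} ≤ 1 := by
  refine card_le_one.2 fun s hs t ht => ?_
  rw [mem_filter] at hs ht
  by_contra hst
  have card_union_le : #(s ∪ t) ≤ #B := card_le_card (union_subset hs.2 ht.2)
  have card_union_add : #(s ∪ t) + #(s ∩ t) = 3 + 3 := by
    rw [card_union_add_card_inter, hL.card_block s hs.1, hL.card_block t ht.1]
  have card_inter_le : #(s ∩ t) ≤ 1 := hL.card_inter_le_one hs.1 ht.1 hst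
  lia

theorem sum_card_inter_offDiag (hL : IsSteinerTripleSystem L) {P : Finset (V × V)}
    (hP : ∀ p ∈ P, p.1 ≠ p.2) : ∑ t ∈ L, #(P ∩ t.offDiag) = #P := by
  have card_blocks_through : ∀ p ∈ P, #{t ∈ L | p ∈ t.offDiag} = 1 := fun p hp => by
    obtain ⟨t, ⟨htL, hpt⟩, ht_unique⟩ := hL.existsUnique_block (hP p hp)
    refine card_eq_one.2 ⟨t, eq_singleton_iff_unique_mem.2 ⟨?_, fun s hs => ?_⟩⟩
    · exact mem_filter.2 ⟨htL, mem_offDiag.2 ⟨hpt.1, hpt.2, hP p hp⟩⟩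
    · rw [mem_filter, mem_offDiag] at hs
      exact ht_unique s ⟨hs.1, hs.2.1, hs.2.2.1⟩
  calc ∑ t ∈ L, #(P ∩ t.offDiag)
      = ∑ t ∈ L, #{p ∈ P | p ∈ t.offDiag} := by simp only [filter_mem_eq_inter]
    _ = ∑ p ∈ P, #{t ∈ L | p ∈ t.offDiag} := by simp only [card_filter]; exact sum_comm
    _ = #P := by rw [sum_const_nat card_blocks_through, mul_one]

end DecidableEq

theorem card_mul_six [Fintype V] (hL : IsSteinerTripleSystem L) :
    #L * 6 = Fintype.card V * (Fintype.card V - 1) := by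
  classical
  calc #L * 6 = ∑ t ∈ L, #(univ.offDiag ∩ t.offDiag) := by
        refine (sum_const_nat fun t ht => ?_).symm
        rw [inter_eq_right.2 (offDiag_mono (subset_univ t)), offDiag_card, hL.card_block t ht]
    _ = #(univ : Finset V).offDiag :=
        hL.sum_card_inter_offDiag fun p hp => (mem_offDiag.1 hp).2.2
    _ = Fintype.card V * (Fintype.card V - 1) := by
        rw [offDiag_card, card_univ, Nat.mul_sub_one]

theorem two_mul_card_monochromatic_add [Fintype V] [DecidableEq V] (hL : IsSteinerTripleSystem L)
    (A : Finset V) :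
    2 * (#{t ∈ L | t ⊆ A} + #{t ∈ L | t ⊆ Aᶜ}) + #A * #Aᶜ = 2 * #L := by
  have sum_mixed_pairs : ∑ t ∈ L, #(t ∩ A) * #(t \ A) = #A * #Aᶜ := by
    simp only [← card_product_compl_inter_offDiag]
    rw [← card_product]
    refine hL.sum_card_inter_offDiag fun p hp h => ?_
    rw [mem_product, mem_compl, h] at hp
    exact hp.2 hp.1
  rw [← sum_mixed_pairs, card_filter, card_filter, ← sum_add_distrib, mul_sum, ← sum_add_distrib,
    mul_comm]
  exact sum_const_nat fun t ht =>
    monochromatic_add_card_inter_mul_card_sdiff (hL.card_block t ht) A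

end IsSteinerTripleSystem

section AffineLines

variable {n : ℕ}

theorem apTriples_eq_filter_subset (A : Finset (Fin n → ZMod 3)) :
    apTriples n A = {t ∈ apTriples n univ | t ⊆ A} := by
  ext t
  simp only [apTriples, mem_filter, mem_powersetCard, subset_univ, true_and]
  tauto

theorem neg_add_ne_left_of_ne {V : Type*} [AddCommGroup V] [Module (ZMod 3) V] {x y : V}
    (hxy : x ≠ y) : -(x + y) ≠ x := by
  intro h
  refine hxy (sub_eq_zero.1 ?_)
  calc x - y = 3 • x + (-(x + y) - x) := by abel
    _ = 0 := by rw [ZModModule.char_nsmul_eq_zero 3 x, h, sub_self, add_zero]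

theorem mem_apTriples_univ_and_mem_iff {x y : Fin n → ZMod 3} (hxy : x ≠ y)
    (t : Finset (Fin n → ZMod 3)) :
    t ∈ apTriples n univ ∧ x ∈ t ∧ y ∈ t ↔ t = {x, y, -(x + y)} := by
  have hx : -(x + y) ≠ x := neg_add_ne_left_of_ne hxy
  have hy : -(x + y) ≠ y := add_comm x y ▸ neg_add_ne_left_of_ne hxy.symm
  simp only [apTriples, mem_filter, mem_powersetCard, subset_univ, true_and]
  constructor
  · rintro ⟨⟨ht_card, ht_sum⟩, hxt, hyt⟩
    have hy_erase : y ∈ t.erase x := mem_erase.2 ⟨hxy.symm, hyt⟩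
    obtain ⟨z, hz⟩ : ∃ z, (t.erase x).erase y = {z} := by
      rw [← card_eq_one, card_erase_of_mem hy_erase, card_erase_of_mem hxt, ht_card]
    rw [← add_sum_erase t _ hxt, ← add_sum_erase _ _ hy_erase, hz, sum_singleton,
      ← add_assoc] at ht_sum
    rw [← eq_neg_of_add_eq_zero_right ht_sum, ← hz, insert_erase hy_erase,
      insert_erase hxt]
  · rintro rfl
    refine ⟨⟨card_eq_three.2 ⟨_, _, _, hxy, hx.symm, hy.symm, rfl⟩, ?_⟩, by simp, by simp⟩
    have hx_notMem : x ∉ ({y, -(x + y)} : Finset (Fin n → ZMod 3)) := by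
      rw [mem_insert, mem_singleton, not_or]
      exact ⟨hxy, hx.symm⟩
    rw [sum_insert hx_notMem, sum_pair hy.symm]
    abel

theorem isSteinerTripleSystem_apTriples_univ : IsSteinerTripleSystem (apTriples n univ) where
  card_block t ht := (mem_powersetCard.1 (mem_filter.1 ht).1).2
  existsUnique_block x y hxy := by
    simp only [mem_apTriples_univ_and_mem_iff hxy]
    exact existsUnique_eq

end AffineLines

theorem min_triples_dim_two_general {V : Type*} [Fintype V] [DecidableEq V]
    {L : Finset (Finset V)} (hL : IsSteinerTripleSystem L) (hV : Fintype.card V = 9) :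
    #L = 12 ∧
    ∀ A : Finset V,
      (#A = 5 → 1 ≤ #{t ∈ L | t ⊆ A}) ∧
      (#A = 6 → 2 ≤ #{t ∈ L | t ⊆ A}) ∧
      (#A = 7 → 5 ≤ #{t ∈ L | t ⊆ A}) ∧
      (#A = 8 → 8 ≤ #{t ∈ L | t ⊆ A}) := by
  have card_blocks : #L = 12 := by
    have := hL.card_mul_six
    rw [hV] at this
    lia
  refine ⟨card_blocks, fun A => ?_⟩
  have card_compl_eq : #Aᶜ = 9 - #A := by rw [card_compl, hV]
  have card_monochromatic := hL.two_mul_card_monochromatic_add A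
  rw [card_blocks, card_compl_eq] at card_monochromatic
  have blocks_compl_le_one := hL.card_blocks_subset_le_one (B := Aᶜ)
  have blocks_compl_eq_zero := hL.card_blocks_subset_eq_zero (B := Aᶜ)
  refine ⟨fun hA => ?_, fun hA => ?_, fun hA => ?_, fun hA => ?_⟩ <;>
    rw [hA] at card_monochromatic card_compl_eq <;> lia

theorem min_triples_dim_two :
    (apTriples 2 Finset.univ).card = 12 ∧
    ∀ A : Finset (Fin 2 → ZMod 3),
      (A.card = 5 → 1 ≤ (apTriples 2 A).card) ∧
      (A.card = 6 → 2 ≤ (apTriples 2 A).card) ∧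
      (A.card = 7 → 5 ≤ (apTriples 2 A).card) ∧
      (A.card = 8 → 8 ≤ (apTriples 2 A).card) := by
  simpa only [← apTriples_eq_filter_subset] using
    min_triples_dim_two_general (isSteinerTripleSystem_apTriples_univ (n := 2)) (by simp)
end

section
/- In (ℤ/3ℤ)^3, where a 3-term arithmetic progression of distinct elements is an unordered triple {a, a+d, a+2d} of three pairwise distinct elements (equivalently, an affine line, of which there are 117 in total): every subset of size 10 contains at least 2 such triples, and every subset of size 13 contains at least 7 such triples. -/
/-!
Slice `A` by the three parallel hyperplanes `φ = c`, for all functionals `φ ≠ 0`. A set `t` lies in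
one of these hyperplanes exactly when `φ` annihilates the direction of its affine span. So all pairs
are counted equally often in this way, and (including `φ = 0`) lines are counted three times as
often as other triples. Hence the sums over `φ` and `c` of `|A_{φ,c}| choose 2` and
`|A_{φ,c}| choose 3` are known in terms of `|A|` and the number of lines in `A`, and an inequality
`a * ∑ c, |A_{φ,c}| choose 2 ≤ b * ∑ c, |A_{φ,c}| choose 3 + s` valid for each single `φ ≠ 0` bounds
the number of lines from below.

In the plane the slices have at most three points, which gives the least number of lines among `k`
points of a plane. In dimension three the slices are planar, and a set with too few lines cannot
have slices which by the planar bound already contain more; the remaining slice sizes satisfy an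
inequality that contradicts the averages.
-/

open Finset Module

lemma sum_card_filter_forall_eq {α β : Type*} [Fintype β] [DecidableEq β]
    (P : Finset (Finset α)) (hP : ∀ t ∈ P, t.Nonempty) (f : α → β) :
    ∑ c, #{t ∈ P | ∀ x ∈ t, f x = c} = #{t ∈ P | ∃ c, ∀ x ∈ t, f x = c} := by
  classical
  rw [← card_biUnion]
  · congr 1
    ext t
    simp
  · intro c _ d _ hcd
    rw [Function.onFun, disjoint_left]
    intro t hc hd
    obtain ⟨htP, htc⟩ := mem_filter.1 hc
    obtain ⟨x, hx⟩ := hP t htP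
    exact hcd ((htc x hx).symm.trans ((mem_filter.1 hd).2 x hx))

lemma finrank_vectorSpan_of_collinear {K V P : Type*} [DivisionRing K] [AddCommGroup V]
    [Module K V] [AddTorsor V P] {s : Set P} (hs : s.Nontrivial) (h : Collinear K s) :
    finrank K (vectorSpan K s) = 1 := by
  have := h.finiteDimensional_vectorSpan
  refine le_antisymm h.finrank_le_one (Submodule.one_le_finrank_iff.2 fun hbot ↦ ?_)
  exact Set.not_subsingleton_iff.2 hs ((vectorSpan_eq_bot_iff_subsingleton K).1 hbot)

section FiniteField

variable {K V : Type*} [Field K] [AddCommGroup V] [Module K V]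

/-- The section of `A` by the affine hyperplane `φ = c`. No `φ ≠ 0` is imposed: for `φ = 0` the
slice at `c = 0` is all of `A` and the others are empty. -/
def hyperplaneSlice [DecidableEq K] (A : Finset V) (φ : Dual K V) (c : K) : Finset V :=
  {x ∈ A | φ x = c}

lemma mem_dualAnnihilator_vectorSpan_iff {s : Set V} (hs : s.Nonempty) {φ : Dual K V} :
    φ ∈ (vectorSpan K s).dualAnnihilator ↔ ∃ c, ∀ x ∈ s, φ x = c := by
  obtain ⟨a, ha⟩ := hs
  rw [vectorSpan_eq_span_vsub_set_right K ha, ← SetLike.mem_coe,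
    Submodule.coe_dualAnnihilator_span]
  constructor
  · intro h
    refine ⟨φ a, fun x hx ↦ sub_eq_zero.1 ?_⟩
    rw [← map_sub]
    exact h ⟨x, hx, rfl⟩
  · rintro ⟨c, hc⟩ _ ⟨x, hx, rfl⟩
    simp [hc x hx, hc a ha]

lemma natCard_dualAnnihilator [FiniteDimensional K V] (W : Submodule K V) :
    Nat.card W.dualAnnihilator = Nat.card K ^ (finrank K V - finrank K W) := by
  rw [Module.natCard_eq_pow_finrank (K := K),
    ← Subspace.finrank_add_finrank_dualAnnihilator_eq W, Nat.add_sub_cancel_left]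

variable [DecidableEq K]

lemma powersetCard_hyperplaneSlice (A : Finset V) (φ : Dual K V) (c : K) (k : ℕ) :
    (hyperplaneSlice A φ c).powersetCard k = {t ∈ A.powersetCard k | ∀ x ∈ t, φ x = c} := by
  ext t
  simp only [hyperplaneSlice, mem_powersetCard, mem_filter, subset_iff]
  grind

lemma exists_map_ker_eq_hyperplaneSlice (A : Finset V) {φ : Dual K V} (hφ : φ ≠ 0) (c : K) :
    ∃ (f : φ.ker →ᵃ[K] V) (hf : Function.Injective f) (B : Finset φ.ker),
      B.map ⟨f, hf⟩ = hyperplaneSlice A φ c := by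
  classical
  obtain ⟨a, rfl⟩ := LinearMap.surjective hφ c
  let f : φ.ker →ᵃ[K] V := φ.ker.subtype.toAffineMap + AffineMap.const K φ.ker a
  have hf : Function.Injective f := fun x y h ↦ Subtype.ext (add_right_cancel h)
  refine ⟨f, hf, (hyperplaneSlice A φ (φ a)).preimage f hf.injOn, ?_⟩
  rw [map_eq_image, Function.Embedding.coeFn_mk, image_preimage]
  refine filter_true_of_mem fun x hx ↦ ⟨⟨x - a, ?_⟩, sub_add_cancel x a⟩
  rw [LinearMap.mem_ker, map_sub, (mem_filter.1 hx).2, sub_self]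

variable [Fintype K]

lemma card_hyperplaneSlice_le {n : ℕ} (hV : finrank K V = n + 1) (A : Finset V) {φ : Dual K V}
    (hφ : φ ≠ 0) (c : K) : #(hyperplaneSlice A φ c) ≤ Fintype.card K ^ n := by
  have : FiniteDimensional K V := .of_finrank_pos (by omega)
  have : Finite φ.ker := Module.finite_of_finite K
  have := Fintype.ofFinite φ.ker
  obtain ⟨f, hf, B, hB⟩ := exists_map_ker_eq_hyperplaneSlice A hφ c
  have finrank_ker : finrank K φ.ker = n := by
    have := Dual.finrank_ker_add_one_of_ne_zero hφ
    omega
  calc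
    #(hyperplaneSlice A φ c) = #B := by rw [← hB, card_map]
    _ ≤ Fintype.card φ.ker := card_le_univ B
    _ = Fintype.card K ^ n := by rw [Module.card_eq_pow_finrank (K := K), finrank_ker]

lemma sum_card_hyperplaneSlice (A : Finset V) (φ : Dual K V) :
    ∑ c, #(hyperplaneSlice A φ c) = #A :=
  (card_eq_sum_card_fiberwise fun _ _ ↦ mem_univ _).symm

lemma sum_choose_card_hyperplaneSlice_zero (A : Finset V) {k : ℕ} (hk : k ≠ 0) :
    ∑ c, (#(hyperplaneSlice A (0 : Dual K V) c)).choose k = (#A).choose k := by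
  rw [sum_eq_single 0]
  · simp [hyperplaneSlice]
  · intro c _ hc
    simp [hyperplaneSlice, hc.symm, Nat.choose_eq_zero_of_lt (Nat.pos_of_ne_zero hk)]
  · simp

lemma sum_dual_sum_choose_card_hyperplaneSlice [Fintype (Dual K V)] (A : Finset V) {k : ℕ}
    (hk : k ≠ 0) :
    ∑ φ : Dual K V, ∑ c, (#(hyperplaneSlice A φ c)).choose k =
      ∑ t ∈ A.powersetCard k, Nat.card (vectorSpan K (t : Set V)).dualAnnihilator := by
  classical
  have nonempty_of_mem : ∀ t ∈ A.powersetCard k, t.Nonempty := fun t ht ↦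
    card_ne_zero.1 ((mem_powersetCard.1 ht).2.trans_ne hk)
  calc
    _ = ∑ φ : Dual K V, #{t ∈ A.powersetCard k | ∃ c, ∀ x ∈ t, φ x = c} := by
      simp only [← card_powersetCard, powersetCard_hyperplaneSlice,
        sum_card_filter_forall_eq _ nonempty_of_mem]
    _ = ∑ t ∈ A.powersetCard k, #{φ : Dual K V | ∃ c, ∀ x ∈ t, φ x = c} := by
      simp only [card_filter]
      exact sum_comm
    _ = _ := by
      refine sum_congr rfl fun t ht ↦ ?_
      rw [Nat.card_eq_fintype_card, Fintype.card_subtype]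
      simp only [mem_dualAnnihilator_vectorSpan_iff (coe_nonempty.2 (nonempty_of_mem t ht)),
        mem_coe]

lemma sum_dual_sum_choose_two_card_hyperplaneSlice [Fintype (Dual K V)] {n : ℕ}
    (hV : finrank K V = n + 1) (A : Finset V) :
    ∑ φ : Dual K V, ∑ c, (#(hyperplaneSlice A φ c)).choose 2 =
      Fintype.card K ^ n * (#A).choose 2 := by
  classical
  have : FiniteDimensional K V := .of_finrank_pos (by omega)
  rw [sum_dual_sum_choose_card_hyperplaneSlice A two_ne_zero,
    sum_const_nat (m := Fintype.card K ^ n), card_powersetCard, mul_comm]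
  intro t ht
  obtain ⟨a, b, hab, rfl⟩ := card_eq_two.1 (mem_powersetCard.1 ht).2
  rw [natCard_dualAnnihilator, coe_pair,
    finrank_vectorSpan_of_collinear (Set.nontrivial_pair hab) (collinear_pair K a b), hV,
    Nat.add_sub_cancel, Nat.card_eq_fintype_card]

end FiniteField

section ZeroSumTriples

variable {V W : Type*} [AddCommGroup V] [Module (ZMod 3) V]

/-- The affine lines over `𝔽₃` contained in `A`, encoded as the three-element subsets with sum `0`;
this is `apTriples` in an arbitrary vector space. -/
def zeroSumTriples {V : Type*} [AddCommMonoid V] [DecidableEq V] (A : Finset V) :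
    Finset (Finset V) :=
  {t ∈ A.powersetCard 3 | ∑ x ∈ t, x = 0}

lemma collinear_triple_iff_add_add_eq_zero {a b c : V} (hab : a ≠ b) (hac : a ≠ c) (hbc : b ≠ c) :
    Collinear (ZMod 3) {a, b, c} ↔ a + b + c = 0 := by
  rw [collinear_iff_of_mem (Set.mem_insert a {b, c})]
  constructor
  · rintro ⟨v, hv⟩
    obtain ⟨r, rfl⟩ := hv b (by simp)
    obtain ⟨s, rfl⟩ := hv c (by simp)
    have hr : r ≠ 0 := by rintro rfl; simp at hab
    have hs : s ≠ 0 := by rintro rfl; simp at hac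
    have hrs : r ≠ s := by rintro rfl; exact hbc rfl
    have add_eq_zero : r + s = 0 := by
      clear * - hr hs hrs
      decide +revert
    calc
      a + (r • v + a) + (s • v + a) = 3 • a + (r + s) • v := by module
      _ = 0 := by rw [ZModModule.char_nsmul_eq_zero 3, add_eq_zero, zero_smul, add_zero]
  · intro h
    refine ⟨b - a, ?_⟩
    simp only [Set.mem_insert_iff, Set.mem_singleton_iff, forall_eq_or_imp, forall_eq]
    refine ⟨⟨0, by simp⟩, ⟨1, by simp⟩, ⟨-1, ?_⟩⟩
    calc
      c = 3 • a + c := by rw [ZModModule.char_nsmul_eq_zero 3, zero_add]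
      _ = (a + b + c) + (2 • a - b) := by module
      _ = (-1 : ZMod 3) • (b - a) +ᵥ a := by rw [h, vadd_eq_add]; module

variable [DecidableEq V]

lemma finrank_vectorSpan_of_card_eq_three {t : Finset V} (ht : #t = 3) :
    finrank (ZMod 3) (vectorSpan (ZMod 3) (t : Set V)) = if ∑ x ∈ t, x = 0 then 1 else 2 := by
  obtain ⟨a, b, c, hab, hac, hbc, rfl⟩ := card_eq_three.1 ht
  have sum_eq : ∑ x ∈ {a, b, c}, x = a + b + c := by
    rw [sum_insert (by simp [hab, hac]), sum_pair hbc, add_assoc]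
  rw [sum_eq, coe_insert, coe_pair]
  split_ifs with h
  · exact finrank_vectorSpan_of_collinear ⟨a, by simp, b, by simp, hab⟩
      ((collinear_triple_iff_add_add_eq_zero hab hac hbc).2 h)
  · have indep : AffineIndependent (ZMod 3) ![a, b, c] :=
      affineIndependent_iff_not_collinear_set.2
        (mt (collinear_triple_iff_add_add_eq_zero hab hac hbc).1 h)
    have range_eq : Set.range ![a, b, c] = {a, b, c} := by
      simp only [Matrix.range_cons, Matrix.range_empty, Set.singleton_union, insert_empty_eq]
    rw [← range_eq]
    exact indep.finrank_vectorSpan (Fintype.card_fin 3)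

lemma sum_dual_sum_choose_three_card_hyperplaneSlice [Fintype (Dual (ZMod 3) V)] {n : ℕ}
    (hV : finrank (ZMod 3) V = n + 2) (A : Finset V) :
    ∑ φ : Dual (ZMod 3) V, ∑ c, (#(hyperplaneSlice A φ c)).choose 3 =
      3 ^ n * ((#A).choose 3 + 2 * #(zeroSumTriples A)) := by
  have : FiniteDimensional (ZMod 3) V := .of_finrank_pos (by omega)
  have natCard_eq : ∀ t ∈ A.powersetCard 3,
      Nat.card (vectorSpan (ZMod 3) (t : Set V)).dualAnnihilator =
        3 ^ n * (1 + 2 * if ∑ x ∈ t, x = 0 then 1 else 0) := by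
    intro t ht
    rw [natCard_dualAnnihilator, finrank_vectorSpan_of_card_eq_three (mem_powersetCard.1 ht).2,
      hV, Nat.card_zmod]
    split_ifs
    · exact pow_succ 3 n
    · simp
  rw [sum_dual_sum_choose_card_hyperplaneSlice A three_ne_zero, sum_congr rfl natCard_eq,
    ← mul_sum, sum_add_distrib, ← mul_sum, ← card_filter, ← card_eq_sum_ones, card_powersetCard,
    zeroSumTriples]

lemma neg_add_notMem_pair {a b : V} (hab : a ≠ b) : -(a + b) ∉ ({a, b} : Finset V) := by
  rw [mem_insert, mem_singleton, neg_eq_iff_add_eq_zero, neg_eq_iff_add_eq_zero]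
  rintro (h | h)
  · refine hab (sub_eq_zero.1 ?_)
    calc
      a - b = 3 • a - (a + b + a) := by module
      _ = 0 := by rw [ZModModule.char_nsmul_eq_zero 3, h, sub_zero]
  · refine hab (sub_eq_zero.1 ?_)
    calc
      a - b = (a + b + b) - 3 • b := by module
      _ = 0 := by rw [ZModModule.char_nsmul_eq_zero 3, h, sub_zero]

lemma filter_pair_subset_zeroSumTriples_univ [Fintype V] {a b : V} (hab : a ≠ b) :
    {t ∈ zeroSumTriples (univ : Finset V) | {a, b} ⊆ t} = {insert (-(a + b)) {a, b}} := by
  ext t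
  simp only [zeroSumTriples, mem_filter, mem_powersetCard_univ, mem_singleton]
  constructor
  · rintro ⟨⟨ht, hsum⟩, hsub⟩
    obtain ⟨c, hc, rfl⟩ := exists_eq_insert_iff.2 ⟨hsub, by rw [card_pair hab, ht]⟩
    rw [sum_insert hc, sum_pair hab] at hsum
    rw [eq_neg_of_add_eq_zero_left hsum]
  · rintro rfl
    have hmem := neg_add_notMem_pair hab
    refine ⟨⟨?_, ?_⟩, subset_insert _ _⟩
    · rw [card_insert_of_notMem hmem, card_pair hab]
    · rw [sum_insert hmem, sum_pair hab, neg_add_cancel]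

lemma card_zeroSumTriples_univ_mul_three [Fintype V] :
    #(zeroSumTriples (univ : Finset V)) * 3 = (Fintype.card V).choose 2 := by
  rw [← card_univ, ← card_powersetCard, ← mul_one #(univ.powersetCard 2)]
  refine card_mul_eq_card_mul (fun t p ↦ p ⊆ t) (fun t ht ↦ ?_) fun p hp ↦ ?_
  · have pairs_eq :
        bipartiteAbove (fun t p ↦ p ⊆ t) (univ.powersetCard 2) t = t.powersetCard 2 := by
      ext p
      simp [bipartiteAbove, and_comm]
    rw [zeroSumTriples, mem_filter, mem_powersetCard_univ] at ht
    rw [pairs_eq, card_powersetCard, ht.1]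
    rfl
  · obtain ⟨a, b, hab, rfl⟩ := card_eq_two.1 (mem_powersetCard_univ.1 hp)
    rw [bipartiteBelow, filter_pair_subset_zeroSumTriples_univ hab, card_singleton]

lemma sum_card_zeroSumTriples_hyperplaneSlice_le (A : Finset V) (φ : Dual (ZMod 3) V) :
    ∑ c, #(zeroSumTriples (hyperplaneSlice A φ c)) ≤ #(zeroSumTriples A) := by
  have nonempty_of_mem : ∀ t ∈ zeroSumTriples A, t.Nonempty := by
    intro t ht
    rw [zeroSumTriples, mem_filter, mem_powersetCard] at ht
    exact card_ne_zero.1 (by omega)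
  calc
    _ = ∑ c, #{t ∈ zeroSumTriples A | ∀ x ∈ t, φ x = c} := by
      simp only [zeroSumTriples, powersetCard_hyperplaneSlice, filter_comm]
    _ = #{t ∈ zeroSumTriples A | ∃ c, ∀ x ∈ t, φ x = c} :=
      sum_card_filter_forall_eq _ nonempty_of_mem φ
    _ ≤ #(zeroSumTriples A) := card_filter_le _ _

variable [AddCommGroup W] [Module (ZMod 3) W] [DecidableEq W]

lemma card_zeroSumTriples_map (f : W →ᵃ[ZMod 3] V) (hf : Function.Injective f) (B : Finset W) :
    #(zeroSumTriples (B.map ⟨f, hf⟩)) = #(zeroSumTriples B) := by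
  have sum_map_eq {t : Finset W} (ht : #t = 3) : ∑ x ∈ t, f x = f.linear (∑ x ∈ t, x) := by
    rw [f.decomp]
    simp [sum_add_distrib, ht, ZModModule.char_nsmul_eq_zero 3]
  have linear_injective := f.linear_injective_iff.2 hf
  rw [zeroSumTriples, powersetCard_map, filter_map, card_map, zeroSumTriples]
  congr 1
  refine filter_congr fun t ht ↦ ?_
  simp only [Function.comp_apply, RelEmbedding.coe_toEmbedding, mapEmbedding_apply, sum_map,
    Function.Embedding.coeFn_mk, sum_map_eq (mem_powersetCard.1 ht).2,
    map_eq_zero_iff _ linear_injective]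

lemma exists_finset_ker_card_eq (A : Finset V) {φ : Dual (ZMod 3) V} (hφ : φ ≠ 0) (c : ZMod 3) :
    ∃ B : Finset φ.ker, #B = #(hyperplaneSlice A φ c) ∧
      #(zeroSumTriples B) = #(zeroSumTriples (hyperplaneSlice A φ c)) := by
  obtain ⟨f, hf, B, hB⟩ := exists_map_ker_eq_hyperplaneSlice A hφ c
  exact ⟨B, by rw [← hB, card_map], by rw [← hB, card_zeroSumTriples_map]⟩

lemma mul_choose_two_le_of_forall_ne_zero {n : ℕ}
    (hV : finrank (ZMod 3) V = n + 2) (A : Finset V) (a b s : ℕ)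
    (h : ∀ φ : Dual (ZMod 3) V, φ ≠ 0 →
      a * ∑ c, (#(hyperplaneSlice A φ c)).choose 2 ≤
        b * ∑ c, (#(hyperplaneSlice A φ c)).choose 3 + s) :
    a * ((3 ^ (n + 1) - 1) * (#A).choose 2) ≤
      b * ((3 ^ n - 1) * (#A).choose 3 + 2 * 3 ^ n * #(zeroSumTriples A)) +
        (3 ^ (n + 2) - 1) * s := by
  classical
  have : FiniteDimensional (ZMod 3) V := .of_finrank_pos (by omega)
  have : Finite (Dual (ZMod 3) V) := Module.finite_of_finite (ZMod 3)
  have := Fintype.ofFinite (Dual (ZMod 3) V)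
  have card_dual : #(univ.erase (0 : Dual (ZMod 3) V)) = 3 ^ (n + 2) - 1 := by
    rw [card_erase_of_mem (mem_univ _), card_univ, Module.card_eq_pow_finrank (K := ZMod 3),
      Subspace.dual_finrank_eq, hV, ZMod.card]
  have sum_choose_two : ∑ φ ∈ univ.erase (0 : Dual (ZMod 3) V),
      ∑ c, (#(hyperplaneSlice A φ c)).choose 2 = (3 ^ (n + 1) - 1) * (#A).choose 2 := by
    have total := sum_dual_sum_choose_two_card_hyperplaneSlice hV A
    rw [← add_sum_erase _ _ (mem_univ 0), sum_choose_card_hyperplaneSlice_zero A two_ne_zero,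
      ZMod.card] at total
    rw [Nat.sub_mul, one_mul, ← total, Nat.add_sub_cancel_left]
  have sum_choose_three : ∑ φ ∈ univ.erase (0 : Dual (ZMod 3) V),
      ∑ c, (#(hyperplaneSlice A φ c)).choose 3 =
        (3 ^ n - 1) * (#A).choose 3 + 2 * 3 ^ n * #(zeroSumTriples A) := by
    have total := sum_dual_sum_choose_three_card_hyperplaneSlice hV A
    rw [← add_sum_erase _ _ (mem_univ 0), sum_choose_card_hyperplaneSlice_zero A three_ne_zero]
      at total
    obtain ⟨m, hm⟩ := Nat.exists_eq_add_of_le (Nat.one_le_pow n 3 three_pos)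
    rw [hm] at total ⊢
    rw [Nat.add_sub_cancel_left]
    linarith
  rw [← sum_choose_two, ← sum_choose_three, ← card_dual, mul_sum, mul_sum, ← smul_eq_mul #_,
    ← sum_const, ← sum_add_distrib]
  exact sum_le_sum fun φ hφ ↦ h φ (ne_of_mem_erase hφ)

lemma sum_zmod_three (f : ZMod 3 → ℕ) : ∑ c, f c = f 0 + f 1 + f 2 :=
  Fin.sum_univ_three f

lemma mul_choose_two_le_of_finrank_eq_two (hV : finrank (ZMod 3) V = 2) (A : Finset V) (a b s : ℕ)
    (h : ∀ x ≤ 3, ∀ y ≤ 3, ∀ z ≤ 3, x + y + z = #A →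
      a * (x.choose 2 + y.choose 2 + z.choose 2) ≤
        b * (x.choose 3 + y.choose 3 + z.choose 3) + s) :
    a * (#A).choose 2 ≤ b * #(zeroSumTriples A) + 4 * s := by
  suffices slice_bound : ∀ φ : Dual (ZMod 3) V, φ ≠ 0 →
      a * ∑ c, (#(hyperplaneSlice A φ c)).choose 2 ≤
        b * ∑ c, (#(hyperplaneSlice A φ c)).choose 3 + s by
    have averaging : a * (2 * (#A).choose 2) ≤
        b * (0 * (#A).choose 3 + 2 * #(zeroSumTriples A)) + 8 * s :=
      mul_choose_two_le_of_forall_ne_zero (n := 0) hV A a b s slice_bound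
    linarith
  intro φ hφ
  have card_le := card_hyperplaneSlice_le hV A hφ
  have card_add := sum_card_hyperplaneSlice A φ
  rw [sum_zmod_three] at card_add
  rw [sum_zmod_three, sum_zmod_three]
  exact h _ (card_le 0) _ (card_le 1) _ (card_le 2) card_add

/-- The least number of lines contained in a set of `k` points of the affine plane over `𝔽₃`. Only
the lower bound is proved; the value for `k > 9`, where there is no such set, is arbitrary. -/
def planeMinTriples : ℕ → ℕ
  | 5 => 1
  | 6 => 2
  | 7 => 5
  | 8 => 8
  | 9 => 12
  | _ => 0

lemma planeMinTriples_le_card_zeroSumTriples (hV : finrank (ZMod 3) V = 2) (A : Finset V) :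
    planeMinTriples #A ≤ #(zeroSumTriples A) := by
  have averaging := mul_choose_two_le_of_finrank_eq_two hV A
  generalize #A = k, #(zeroSumTriples A) = T at averaging ⊢
  unfold planeMinTriples
  split
  · have : 1 * 10 ≤ 2 * T + 4 * 2 := averaging 1 2 2 (by decide)
    omega
  · have : 2 * 15 ≤ 3 * T + 4 * 6 := averaging 2 3 6 (by decide)
    omega
  · have : 1 * 21 ≤ 1 * T + 4 * 4 := averaging 1 1 4 (by decide)
    omega
  · have : 1 * 28 ≤ 1 * T + 4 * 5 := averaging 1 1 5 (by decide)
    omega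
  · have : 1 * 36 ≤ 1 * T + 4 * 6 := averaging 1 1 6 (by decide)
    omega
  · exact Nat.zero_le T

lemma planeMinTriples_card_hyperplaneSlice_le (hV : finrank (ZMod 3) V = 3) (A : Finset V)
    {φ : Dual (ZMod 3) V} (hφ : φ ≠ 0) (c : ZMod 3) :
    planeMinTriples #(hyperplaneSlice A φ c) ≤ #(zeroSumTriples (hyperplaneSlice A φ c)) := by
  have : FiniteDimensional (ZMod 3) V := .of_finrank_pos (by omega)
  have finrank_ker : finrank (ZMod 3) φ.ker = 2 := by
    have := Dual.finrank_ker_add_one_of_ne_zero hφ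
    omega
  obtain ⟨B, card_B, card_triples_B⟩ := exists_finset_ker_card_eq A hφ c
  rw [← card_B, ← card_triples_B]
  exact planeMinTriples_le_card_zeroSumTriples finrank_ker B

lemma mul_choose_two_le_of_finrank_eq_three (hV : finrank (ZMod 3) V = 3) (A : Finset V)
    (a b s : ℕ)
    (h : ∀ x ≤ 9, ∀ y ≤ 9, ∀ z ≤ 9, x + y + z = #A →
      planeMinTriples x + planeMinTriples y + planeMinTriples z ≤ #(zeroSumTriples A) →
      a * (x.choose 2 + y.choose 2 + z.choose 2) ≤
        b * (x.choose 3 + y.choose 3 + z.choose 3) + s) :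
    4 * a * (#A).choose 2 ≤ b * ((#A).choose 3 + 3 * #(zeroSumTriples A)) + 13 * s := by
  suffices slice_bound : ∀ φ : Dual (ZMod 3) V, φ ≠ 0 →
      a * ∑ c, (#(hyperplaneSlice A φ c)).choose 2 ≤
        b * ∑ c, (#(hyperplaneSlice A φ c)).choose 3 + s by
    have averaging : a * (8 * (#A).choose 2) ≤
        b * (2 * (#A).choose 3 + 6 * #(zeroSumTriples A)) + 26 * s :=
      mul_choose_two_le_of_forall_ne_zero (n := 1) hV A a b s slice_bound
    linarith
  intro φ hφ
  have card_le := card_hyperplaneSlice_le hV A hφ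
  have card_add := sum_card_hyperplaneSlice A φ
  have sum_planeMinTriples_le :=
    (sum_le_sum fun c _ ↦ planeMinTriples_card_hyperplaneSlice_le hV A hφ c).trans
      (sum_card_zeroSumTriples_hyperplaneSlice_le A φ)
  rw [sum_zmod_three] at card_add sum_planeMinTriples_le
  rw [sum_zmod_three, sum_zmod_three]
  exact h _ (card_le 0) _ (card_le 1) _ (card_le 2) card_add sum_planeMinTriples_le

lemma two_le_card_zeroSumTriples (hV : finrank (ZMod 3) V = 3) {A : Finset V} (hA : #A = 10) :
    2 ≤ #(zeroSumTriples A) := by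
  by_contra! hlt
  -- The coefficients come from equality at `(4, 3, 3)`, `(4, 4, 2)` and `(5, 4, 1)`.
  have slice_bound : ∀ x ≤ 9, ∀ y ≤ 9, ∀ z ≤ 9, x + y + z = 10 →
      planeMinTriples x + planeMinTriples y + planeMinTriples z ≤ 1 →
      2 * (x.choose 2 + y.choose 2 + z.choose 2) ≤
        1 * (x.choose 3 + y.choose 3 + z.choose 3) + 18 := by
    decide +kernel
  have averaging := mul_choose_two_le_of_finrank_eq_three hV A 2 1 18 fun x hx y hy z hz hsum hle ↦
    slice_bound x hx y hy z hz (hsum.trans hA) (hle.trans (Nat.le_of_lt_succ hlt))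
  rw [hA, show Nat.choose 10 2 = 45 from rfl, show Nat.choose 10 3 = 120 from rfl] at averaging
  omega

lemma seven_le_card_zeroSumTriples (hV : finrank (ZMod 3) V = 3) {A : Finset V} (hA : #A = 13) :
    7 ≤ #(zeroSumTriples A) := by
  by_contra! hlt
  -- The coefficients come from equality at `(5, 4, 4)` and `(6, 6, 1)`.
  have slice_bound : ∀ x ≤ 9, ∀ y ≤ 9, ∀ z ≤ 9, x + y + z = 13 →
      planeMinTriples x + planeMinTriples y + planeMinTriples z ≤ 6 →
      11 * (x.choose 2 + y.choose 2 + z.choose 2) ≤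
        4 * (x.choose 3 + y.choose 3 + z.choose 3) + 170 := by
    decide +kernel
  have averaging := mul_choose_two_le_of_finrank_eq_three hV A 11 4 170
    fun x hx y hy z hz hsum hle ↦
      slice_bound x hx y hy z hz (hsum.trans hA) (hle.trans (Nat.le_of_lt_succ hlt))
  rw [hA, show Nat.choose 13 2 = 78 from rfl, show Nat.choose 13 3 = 286 from rfl] at averaging
  omega

theorem min_triples_dim_three_general [Fintype V] (hV : finrank (ZMod 3) V = 3) :
    #(zeroSumTriples (univ : Finset V)) = 117 ∧
    ∀ A : Finset V,
      (#A = 10 → 2 ≤ #(zeroSumTriples A)) ∧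
      (#A = 13 → 7 ≤ #(zeroSumTriples A)) := by
  refine ⟨?_, fun A ↦ ⟨two_le_card_zeroSumTriples hV, seven_le_card_zeroSumTriples hV⟩⟩
  have count := card_zeroSumTriples_univ_mul_three (V := V)
  rw [Module.card_eq_pow_finrank (K := ZMod 3), hV, ZMod.card,
    show Nat.choose (3 ^ 3) 2 = 351 from rfl] at count
  omega

end ZeroSumTriples

theorem min_triples_dim_three :
    (apTriples 3 Finset.univ).card = 117 ∧
    ∀ A : Finset (Fin 3 → ZMod 3),
      (A.card = 10 → 2 ≤ (apTriples 3 A).card) ∧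
      (A.card = 13 → 7 ≤ (apTriples 3 A).card) :=
  min_triples_dim_three_general (finrank_fin_fun (ZMod 3))
end

section
/- If four subsets A₁, A₂, A₃, A₄ ⊆ (ℤ/3ℤ)^2 satisfy property (*)_6 (i.e., Aᵢ ∩ Aⱼ contains no 3-term arithmetic progression of distinct elements for all i ≠ j) and |A₁| + |A₂| + |A₃| + |A₄| = 25, then exactly one of the four subsets has size 7 and the other three have size 6. -/
/-!
Let `S` be a progression-free set in an `𝔽₃`-vector space `G`. For `p ∈ S`, the map
`x ↦ -(p + x)` sends `S \ {p}` injectively into `Sᶜ`. If `|Sᶜ| < |S|`, this map is onto `Sᶜ` for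
every `p`; comparing the maps for `p` and `q` shows that `x ∈ S \ {p}` implies `x + (p - q) ∈ S`.
By symmetry, a third point `x ∈ S` is then the midpoint of `x ± (p - q)`, which is impossible.
So `2 |S| ≤ |G|` once `|S| ≥ 3`, and in the plane `|S| ≤ 4`.

Hence any two of the given sets have sizes adding up to at most `9 + 4 = 13`. Some set has size
`a ≥ 7`, so the other three have size at most `13 - a`, and `25 ≤ a + 3 (13 - a)` forces `a = 7` and
equality throughout.
-/

open Finset

section ElementaryAbelianThreeGroup

variable {G : Type*} [AddCommGroup G] [Module (ZMod 3) G]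

lemma add_self_eq_neg (x : G) : x + x = -x := by
  have h : 3 • x = 0 := ZModModule.char_nsmul_eq_zero 3 x
  rw [eq_neg_iff_add_eq_zero, ← h]
  abel

lemma threeAPFree_of_not_isDistinctAP {S : Set G} (hS : ¬ IsDistinctAP 3 S) : ThreeAPFree S := by
  intro a ha b hb c hc habc
  by_contra hab
  have hterms : (fun i : Fin 3 => a + (i : ℕ) • (b - a)) = ![a, b, c] := by
    have hc_eq : c = b + b - a := eq_sub_of_add_eq' habc
    funext i
    fin_cases i
    · simp
    · simp
    · simp only [Fin.reduceFinMk, Matrix.cons_val, hc_eq]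
      abel
  have hbc : b ≠ c := by
    rintro rfl
    exact hab (add_right_cancel habc)
  have hac : a ≠ c := by
    rintro rfl
    rw [add_self_eq_neg, add_self_eq_neg, neg_inj] at habc
    exact hab habc
  refine hS ⟨a, b - a, fun i => ?_, ?_⟩
  · rw [congrFun hterms i]
    fin_cases i <;> assumption
  · rw [hterms]
    intro i j hij
    fin_cases i <;> fin_cases j <;> simp_all

lemma neg_add_notMem_of_threeAPFree {S : Set G} (hS : ThreeAPFree S) {p x : G} (hp : p ∈ S)
    (hx : x ∈ S) (hxp : x ≠ p) : -(p + x) ∉ S := by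
  intro hmem
  refine hxp (hS hp hx hmem ?_).symm
  rw [add_self_eq_neg]
  abel

variable [Fintype G] {S : Finset G}

lemma image_neg_add_erase_eq_compl [DecidableEq G] (hS : ThreeAPFree (S : Set G))
    (hcard : #Sᶜ < #S) {p : G} (hp : p ∈ S) : (S.erase p).image (fun x => -(p + x)) = Sᶜ := by
  apply eq_of_subset_of_card_le
  · intro y hy
    obtain ⟨x, hx, rfl⟩ := mem_image.mp hy
    obtain ⟨hxp, hxS⟩ := mem_erase.mp hx
    exact mem_compl.mpr (neg_add_notMem_of_threeAPFree hS hp hxS hxp)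
  · have hinj : Function.Injective fun x => -(p + x) :=
      neg_injective.comp (add_right_injective p)
    rw [card_image_of_injective _ hinj, card_erase_of_mem hp]
    exact Nat.le_sub_one_of_lt hcard

lemma add_sub_mem_of_card_compl_lt [DecidableEq G] (hS : ThreeAPFree (S : Set G))
    (hcard : #Sᶜ < #S) {p q x : G} (hp : p ∈ S) (hq : q ∈ S) (hx : x ∈ S)
    (hxp : x ≠ p) : x + (p - q) ∈ S := by
  have hmem : -(p + x) ∈ (S.erase q).image (fun y => -(q + y)) := by
    rw [image_neg_add_erase_eq_compl hS hcard hq, ← image_neg_add_erase_eq_compl hS hcard hp]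
    exact mem_image_of_mem _ (mem_erase.mpr ⟨hxp, hx⟩)
  obtain ⟨y, hy, hyx⟩ := mem_image.mp hmem
  have hy_eq : y = x + (p - q) := by
    rw [eq_sub_of_add_eq' (neg_injective hyx)]
    abel
  exact hy_eq ▸ mem_of_mem_erase hy

theorem two_mul_card_le_card_of_threeAPFree (hS : ThreeAPFree (S : Set G)) (hthree : 3 ≤ #S) :
    2 * #S ≤ Fintype.card G := by
  classical
  by_contra! hlarge
  have hcard : #Sᶜ < #S := by
    rw [card_compl]
    omega
  obtain ⟨p, q, x, hp, hq, hx, hpq, hpx, hqx⟩ := two_lt_card_iff.mp hthree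
  have hplus : x + (p - q) ∈ S := add_sub_mem_of_card_compl_lt hS hcard hp hq hx hpx.symm
  have hminus : x + (q - p) ∈ S := add_sub_mem_of_card_compl_lt hS hcard hq hp hx hqx.symm
  have hmid : x + (p - q) = x := hS hplus hx hminus (by abel)
  exact hpq (sub_eq_zero.mp (left_eq_add.mp hmid.symm))

lemma card_le_four_of_threeAPFree (hG : Fintype.card G = 9) (hS : ThreeAPFree (S : Set G)) :
    #S ≤ 4 := by
  by_contra! hlarge
  have := two_mul_card_le_card_of_threeAPFree hS (by omega)
  omega

lemma card_add_card_le_of_threeAPFree_inter [DecidableEq G] (hG : Fintype.card G = 9)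
    {A B : Finset G} (hAB : ThreeAPFree ((A ∩ B : Finset G) : Set G)) : #A + #B ≤ 13 :=
  calc #A + #B = #(A ∪ B) + #(A ∩ B) := (card_union_add_card_inter A B).symm
    _ ≤ 9 + 4 := add_le_add (hG ▸ card_le_univ _) (card_le_four_of_threeAPFree hG hAB)

end ElementaryAbelianThreeGroup

section Counting

variable {ι : Type*} [Fintype ι] {f : ι → ℕ} {m : ℕ}

lemma le_of_pairwise_add_le_of_sum_eq (hι : 3 ≤ Fintype.card ι)
    (hpair : ∀ i j, i ≠ j → f i + f j ≤ 2 * m + 1) (hsum : ∑ i, f i = m * Fintype.card ι + 1)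
    (i : ι) : f i ≤ m + 1 := by
  classical
  obtain ⟨r, hr⟩ := Nat.exists_eq_add_of_le' hι
  have hothers : #(univ.erase i) = r + 2 := by
    rw [card_erase_of_mem (mem_univ i), card_univ, hr]
    rfl
  have hpairs : (r + 2) * f i + ∑ j ∈ univ.erase i, f j ≤ (r + 2) * (2 * m + 1) :=
    calc (r + 2) * f i + ∑ j ∈ univ.erase i, f j = ∑ j ∈ univ.erase i, (f i + f j) := by
          rw [sum_add_distrib, sum_const, hothers, smul_eq_mul]
      _ ≤ #(univ.erase i) • (2 * m + 1) :=
          sum_le_card_nsmul _ _ _ fun j hj => hpair i j (ne_of_mem_erase hj).symm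
      _ = (r + 2) * (2 * m + 1) := by rw [hothers, smul_eq_mul]
  rw [← add_sum_erase univ f (mem_univ i), hr] at hsum
  have hscaled : (r + 1) * f i ≤ (r + 1) * (m + 1) := by linarith
  exact Nat.le_of_mul_le_mul_left hscaled r.succ_pos

theorem exists_eq_succ_forall_ne_eq_of_pairwise_add_le (hι : 3 ≤ Fintype.card ι)
    (hpair : ∀ i j, i ≠ j → f i + f j ≤ 2 * m + 1) (hsum : ∑ i, f i = m * Fintype.card ι + 1) :
    ∃ i, f i = m + 1 ∧ ∀ j, j ≠ i → f j = m := by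
  classical
  obtain ⟨i, -, hlarge⟩ : ∃ i ∈ univ, m < f i := by
    apply exists_lt_of_sum_lt
    rw [hsum, sum_const, card_univ, smul_eq_mul, mul_comm]
    exact Nat.lt_succ_self _
  have hi : f i = m + 1 := le_antisymm (le_of_pairwise_add_le_of_sum_eq hι hpair hsum i) hlarge
  have hle : ∀ j ∈ univ.erase i, f j ≤ m := fun j hj => by
    have := hpair i j (ne_of_mem_erase hj).symm
    omega
  have hrest : ∑ j ∈ univ.erase i, f j = ∑ _ ∈ univ.erase i, m := by
    have htotal := add_sum_erase univ f (mem_univ i)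
    have hconst : m + ∑ _ ∈ univ.erase i, m = m * Fintype.card ι := by
      rw [add_sum_erase univ (fun _ => m) (mem_univ i), sum_const, card_univ, smul_eq_mul,
        mul_comm]
    omega
  exact ⟨i, hi, fun j hj =>
    (sum_eq_sum_iff_of_le hle).mp hrest j (mem_erase.mpr ⟨hj, mem_univ j⟩)⟩

end Counting

theorem extremal_structure_dim_two_general {ι G : Type*} [Fintype ι] [AddCommGroup G]
    [Module (ZMod 3) G] [Fintype G] [DecidableEq G] (hι : 3 ≤ Fintype.card ι)
    (hG : Fintype.card G = 9) (A : ι → Finset G)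
    (hstar : ∀ i j, i ≠ j → ¬ IsDistinctAP 3 ((A i ∩ A j : Finset G) : Set G))
    (hsum : ∑ i, #(A i) = 6 * Fintype.card ι + 1) :
    ∃ i, #(A i) = 7 ∧ ∀ j, j ≠ i → #(A j) = 6 :=
  exists_eq_succ_forall_ne_eq_of_pairwise_add_le hι
    (fun i j hij => card_add_card_le_of_threeAPFree_inter hG
      (threeAPFree_of_not_isDistinctAP (hstar i j hij))) hsum

theorem extremal_structure_dim_two (A : Fin 4 → Finset (Fin 2 → ZMod 3))
    (hstar : ∀ i j : Fin 4, i ≠ j →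
      ¬ IsDistinctAP 3 ((A i ∩ A j : Finset (Fin 2 → ZMod 3)) : Set (Fin 2 → ZMod 3)))
    (hsum : (A 0).card + (A 1).card + (A 2).card + (A 3).card = 25) :
    ∃ i : Fin 4, (A i).card = 7 ∧ ∀ j : Fin 4, j ≠ i → (A j).card = 6 :=
  extremal_structure_dim_two_general (by simp) (by simp) A hstar
    (by simpa [Fin.sum_univ_four] using hsum)
end

section
/- Let n ≥ 1 and let A_i ⊆ (ℤ/3ℤ)^n, for i ranging over an index set I of size 2^n, be a family of subsets such that A_i ∩ A_j contains no 3-term arithmetic progression of distinct elements for all distinct i, j ∈ I. Then S := ∑_{i ∈ I} |A_i| satisfies S² − 3^n·S − 2^{2n}·3^n·r_3(ℤ_3^n) ≤ 0. -/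
/-!
Let `d x` be the number of indices `i` with `x ∈ A i`. Then `∑ i, |A i| = ∑ x, d x` and
`∑ i, ∑ j, |A i ∩ A j| = ∑ x, (d x) ^ 2`, so Cauchy–Schwarz over the points `x` bounds
`(∑ i, |A i|) ^ 2` by the size of the ambient space times `∑ i, ∑ j, |A i ∩ A j|`. The diagonal of
this double sum is `∑ i, |A i|`, and each off-diagonal term is at most `rAP`.
-/

open Finset

section SetFamilies

variable {ι α : Type*} [DecidableEq α]

lemma sum_card_eq_sum_card_filter_mem {s : Finset ι} {t : Finset α} {A : ι → Finset α}
    (hA : ∀ i ∈ s, A i ⊆ t) : ∑ i ∈ s, #(A i) = ∑ x ∈ t, #{i ∈ s | x ∈ A i} := by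
  calc ∑ i ∈ s, #(A i) = ∑ i ∈ s, #{x ∈ t | x ∈ A i} :=
        sum_congr rfl fun i hi ↦ by rw [filter_mem_eq_inter, inter_eq_right.2 (hA i hi)]
    _ = ∑ x ∈ t, #{i ∈ s | x ∈ A i} :=
        sum_card_bipartiteAbove_eq_sum_card_bipartiteBelow fun i x ↦ x ∈ A i

lemma sum_card_inter_eq_sum_sq_card_filter_mem {s : Finset ι} {t : Finset α}
    {A : ι → Finset α} (hA : ∀ i ∈ s, A i ⊆ t) :
    ∑ p ∈ s ×ˢ s, #(A p.1 ∩ A p.2) = ∑ x ∈ t, #{i ∈ s | x ∈ A i} ^ 2 := by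
  have inter_subset : ∀ p ∈ s ×ˢ s, A p.1 ∩ A p.2 ⊆ t := fun p hp ↦
    inter_subset_left.trans (hA p.1 (mem_product.1 hp).1)
  rw [sum_card_eq_sum_card_filter_mem inter_subset]
  refine sum_congr rfl fun x _ ↦ ?_
  simp only [mem_inter]
  rw [filter_product (x ∈ A ·) (x ∈ A ·), card_product, sq]

lemma sq_sum_card_le_card_mul_sum_card_inter {s : Finset ι} {t : Finset α}
    {A : ι → Finset α} (hA : ∀ i ∈ s, A i ⊆ t) :
    (∑ i ∈ s, #(A i)) ^ 2 ≤ #t * ∑ p ∈ s ×ˢ s, #(A p.1 ∩ A p.2) := by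
  rw [sum_card_eq_sum_card_filter_mem hA, sum_card_inter_eq_sum_sq_card_filter_mem hA]
  exact sq_sum_le_card_mul_sum_sq

lemma sum_card_inter_le_sum_card_add {s : Finset ι} {A : ι → Finset α} {r : ℕ}
    (hr : ∀ i ∈ s, ∀ j ∈ s, i ≠ j → #(A i ∩ A j) ≤ r) :
    ∑ p ∈ s ×ˢ s, #(A p.1 ∩ A p.2) ≤ ∑ i ∈ s, #(A i) + #s.offDiag * r := by
  classical
  rw [← diag_union_offDiag, sum_union (disjoint_diag_offDiag s), sum_diag]
  simp only [inter_self]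
  gcongr
  refine sum_le_card_nsmul _ _ _ fun p hp ↦ ?_
  obtain ⟨hi, hj, hij⟩ := mem_offDiag.1 hp
  exact hr p.1 hi p.2 hj hij

theorem sq_sum_card_le_of_card_inter_le {s : Finset ι} {t : Finset α}
    {A : ι → Finset α} {r : ℕ} (hA : ∀ i ∈ s, A i ⊆ t)
    (hr : ∀ i ∈ s, ∀ j ∈ s, i ≠ j → #(A i ∩ A j) ≤ r) :
    (∑ i ∈ s, #(A i)) ^ 2 ≤ #t * (∑ i ∈ s, #(A i) + #s.offDiag * r) :=
  (sq_sum_card_le_card_mul_sum_card_inter hA).trans <|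
    Nat.mul_le_mul_left _ (sum_card_inter_le_sum_card_add hr)

end SetFamilies

lemma card_le_rAP {k m n : ℕ} [NeZero m] {A : Finset (Fin n → ZMod m)}
    (hA : ¬ IsDistinctAP k (A : Set (Fin n → ZMod m))) : #A ≤ rAP k m n := by
  refine le_csSup ⟨Fintype.card (Fin n → ZMod m), ?_⟩ ⟨A, hA, rfl⟩
  rintro _ ⟨B, -, rfl⟩
  exact card_le_univ B

theorem cauchy_schwarz_bound_general {k m n : ℕ} [NeZero m] {I : Type*} [Fintype I]
    {A : I → Finset (Fin n → ZMod m)}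
    (hA : ∀ i j : I, i ≠ j →
      ¬ IsDistinctAP k ((A i ∩ A j : Finset (Fin n → ZMod m)) : Set (Fin n → ZMod m))) :
    (∑ i, (#(A i) : ℤ)) ^ 2 - m ^ n * ∑ i, (#(A i) : ℤ)
      - Fintype.card I ^ 2 * m ^ n * rAP k m n ≤ 0 := by
  have card_space : #(univ : Finset (Fin n → ZMod m)) = m ^ n := by simp [ZMod.card]
  have card_offDiag_le : #(univ : Finset I).offDiag ≤ Fintype.card I ^ 2 := by
    rw [offDiag_card, card_univ, sq]
    exact Nat.sub_le _ _
  have bound : (∑ i, #(A i)) ^ 2 ≤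
      m ^ n * (∑ i, #(A i) + Fintype.card I ^ 2 * rAP k m n) := by
    calc (∑ i, #(A i)) ^ 2
        ≤ m ^ n * (∑ i, #(A i) + #(univ : Finset I).offDiag * rAP k m n) := by
          rw [← card_space]
          exact sq_sum_card_le_of_card_inter_le (fun i _ ↦ subset_univ (A i))
            fun i _ j _ hij ↦ card_le_rAP (hA i j hij)
      _ ≤ m ^ n * (∑ i, #(A i) + Fintype.card I ^ 2 * rAP k m n) := by gcongr
  zify at bound
  linarith

theorem cauchy_schwarz_bound (n : ℕ) (hn : 1 ≤ n) (I : Type*) [Fintype I]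
    (hI : Fintype.card I = 2 ^ n) (A : I → Finset (Fin n → ZMod 3))
    (hstar : ∀ i j : I, i ≠ j →
      ¬ IsDistinctAP 3 ((A i ∩ A j : Finset (Fin n → ZMod 3)) : Set (Fin n → ZMod 3))) :
    ((∑ i : I, (A i).card : ℤ)) ^ 2 - 3 ^ n * (∑ i : I, (A i).card : ℤ)
      - 2 ^ (2 * n) * 3 ^ n * rAP 3 3 n ≤ 0 := by
  simpa [hI, ← pow_mul, mul_comm n 2] using cauchy_schwarz_bound_general hstar
end
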